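/- Let β ∈ (0, 1]. Then for every real t, Re G_{β,0}(it) = ∫₀^∞ exp(−y^{β+1}/(β+1))·cos(t y) dy > 0. Consequently, in the case ν = 0 and β ∈ (0,1], for no ϑ > 0 and no real t ≠ 0 does the eigenvalue equation ϑ·(it) + G_{β,0}(it) = 0 hold; i.e., no purely imaginary eigenvalue and hence no Hopf bifurcation occurs for any value of the removal parameter. -/

import Mathlib

/-- The characteristic function `G_{β,μ}(λ) = ∫₀^∞ z^μ exp(−z^{β+1}/(β+1)) e^{−λz} dz`
of the linearized Becker–Döring bubblelator limit model. -/
noncomputable def G (β μ : ℝ) (l : ℂ) : ℂ :=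
  ∫ z in Set.Ioi (0 : ℝ),
    ((z ^ μ * Real.exp (-z ^ (β + 1) / (β + 1)) : ℝ) : ℂ) * Complex.exp (-l * (z : ℂ))

section helpers

open MeasureTheory Set Filter Topology

lemma gauss_cos_eq (δ : ℝ) (hδ : 0 < δ) (t : ℝ) :
    0 < ∫ y in Ioi (0:ℝ), Real.exp (-δ * y ^ 2) * Real.cos (t * y) := by
  have h1 := fourierIntegral_gaussian (b := (δ:ℂ)) (by simpa using hδ) (t : ℂ)
  have hint : Integrable (fun x : ℝ => Complex.exp (Complex.I * t * x) * Complex.exp (-(δ:ℂ) * (x:ℂ) ^ 2)) := by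
    have h0 : Integrable (fun x : ℝ => Real.exp (-δ * x ^ 2)) := integrable_exp_neg_mul_sq hδ
    refine h0.mono' ?_ ?_
    · exact (by fun_prop : Continuous _).aestronglyMeasurable
    · refine Eventually.of_forall fun x => ?_
      rw [norm_mul, Complex.norm_exp, Complex.norm_exp]
      have e1 : (Complex.I * t * x).re = 0 := by simp
      have e2 : (-(δ:ℂ) * (x:ℂ) ^ 2).re = -δ * x ^ 2 := by
        have : (-(δ:ℂ) * (x:ℂ) ^ 2) = ((-δ * x ^ 2 : ℝ) : ℂ) := by push_cast; ring
        rw [this, Complex.ofReal_re]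
      rw [e1, e2]; simp
  have h2 := integral_re hint
  rw [h1] at h2
  have h3 : ∀ x : ℝ, RCLike.re (Complex.exp (Complex.I * t * x) * Complex.exp (-(δ:ℂ) * (x:ℂ) ^ 2))
      = (fun y => Real.exp (-δ * y ^ 2) * Real.cos (t * y)) |x| := by
    intro x
    have : Complex.exp (Complex.I * t * x) * Complex.exp (-(δ:ℂ) * (x:ℂ) ^ 2)
      = Complex.exp (((t * x : ℝ) : ℂ) * Complex.I) * ((Real.exp (-δ * x ^ 2) : ℝ) : ℂ) := by
      push_cast; congr 2; ring
    rw [this]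
    simp only [RCLike.re_eq_complex_re, Complex.re_mul_ofReal, Complex.exp_ofReal_mul_I_re, sq_abs]
    have : Real.cos (t * |x|) = Real.cos (t * x) := by
      rcases abs_cases x with h | h <;> rw [h.1]
      rw [mul_neg, Real.cos_neg]
    rw [this]; ring
  simp_rw [h3] at h2
  replace h2 := (integral_comp_abs
    (f := fun y => Real.exp (-δ * y ^ 2) * Real.cos (t * y))).symm.trans h2
  have h4 : ((Real.pi / (δ:ℂ)) ^ (1 / 2 : ℂ) * Complex.exp (-(t:ℂ) ^ 2 / (4 * δ)))
      = (((Real.pi / δ) ^ (1/2:ℝ) * Real.exp (-t^2 / (4*δ)) : ℝ) : ℂ) := by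
    rw [Complex.ofReal_mul, Complex.ofReal_cpow (by positivity)]
    push_cast; rfl
  rw [h4] at h2
  have h5 : 0 < (Real.pi / δ) ^ (1/2:ℝ) * Real.exp (-t^2 / (4*δ)) := by positivity
  simp only [RCLike.re_eq_complex_re, Complex.ofReal_re] at h2
  linarith

/-- Bounded measurable functions whose Gaussian-regularised cosine transforms are nonnegative. -/
def Npos (φ : ℝ → ℝ) : Prop :=
  Measurable φ ∧ (∃ C, ∀ y, |φ y| ≤ C) ∧
    ∀ δ > 0, ∀ t : ℝ, 0 ≤ ∫ y in Ioi (0:ℝ), φ y * (Real.exp (-δ * y ^ 2) * Real.cos (t * y))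

lemma Npos.integrable {φ : ℝ → ℝ} (h : Measurable φ) (hb : ∃ C, ∀ y, |φ y| ≤ C) {δ : ℝ} (hδ : 0 < δ)
    (t : ℝ) : IntegrableOn (fun y => φ y * (Real.exp (-δ * y ^ 2) * Real.cos (t * y))) (Ioi 0) := by
  obtain ⟨C, hC⟩ := hb
  refine Integrable.bdd_mul (c := C) ?_ h.aestronglyMeasurable (Eventually.of_forall hC)
  have h0 : Integrable (fun x : ℝ => Real.exp (-δ * x ^ 2)) := integrable_exp_neg_mul_sq hδ
  refine h0.integrableOn.mono' (by fun_prop) (Eventually.of_forall fun y => ?_)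
  rw [norm_mul, Real.norm_eq_abs, Real.norm_eq_abs, abs_of_pos (Real.exp_pos _)]
  exact mul_le_of_le_one_right (Real.exp_pos _).le (Real.abs_cos_le_one _)

lemma Npos.one : Npos (fun _ => 1) :=
  ⟨measurable_const, ⟨1, fun _ => by simp⟩, fun δ hδ t => by
    simpa using (gauss_cos_eq δ hδ t).le⟩

lemma Npos.smul {φ : ℝ → ℝ} (h : Npos φ) {c : ℝ} (hc : 0 ≤ c) : Npos (fun y => c * φ y) := by
  obtain ⟨h1, ⟨C, hC⟩, h3⟩ := h
  refine ⟨h1.const_mul c, ⟨c * C, fun y => ?_⟩, fun δ hδ t => ?_⟩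
  · rw [abs_mul, abs_of_nonneg hc]; exact mul_le_mul_of_nonneg_left (hC y) hc
  · simp_rw [mul_assoc c, integral_const_mul]
    exact mul_nonneg hc (h3 δ hδ t)

lemma Npos.add {φ ψ : ℝ → ℝ} (h : Npos φ) (h' : Npos ψ) : Npos (fun y => φ y + ψ y) := by
  obtain ⟨h1, ⟨C, hC⟩, h3⟩ := h
  obtain ⟨h1', ⟨C', hC'⟩, h3'⟩ := h'
  refine ⟨h1.add h1', ⟨C + C', fun y => (abs_add_le _ _).trans (add_le_add (hC y) (hC' y))⟩,
    fun δ hδ t => ?_⟩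
  simp_rw [add_mul]
  rw [integral_add (Npos.integrable h1 ⟨C, hC⟩ hδ t) (Npos.integrable h1' ⟨C', hC'⟩ hδ t)]
  exact add_nonneg (h3 δ hδ t) (h3' δ hδ t)

lemma Npos.lim {φ : ℕ → ℝ → ℝ} {ψ : ℝ → ℝ} (h : ∀ n, Npos (φ n)) (C : ℝ)
    (hC : ∀ n y, |φ n y| ≤ C) (hlim : ∀ y, Tendsto (fun n => φ n y) atTop (𝓝 (ψ y))) : Npos ψ := by
  refine ⟨measurable_of_tendsto_metrizable (fun n => (h n).1) (tendsto_pi_nhds.2 hlim),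
    ⟨C, fun y => le_of_tendsto (hlim y).abs (Eventually.of_forall fun n => hC n y)⟩, fun δ hδ t => ?_⟩
  have h0 : Integrable (fun x : ℝ => C * Real.exp (-δ * x ^ 2)) :=
    (integrable_exp_neg_mul_sq hδ).const_mul C
  refine ge_of_tendsto' (tendsto_integral_of_dominated_convergence
    (F := fun n y => φ n y * (Real.exp (-δ * y ^ 2) * Real.cos (t * y)))
    (fun y => C * Real.exp (-δ * y ^ 2)) (fun n => ?_) h0.integrableOn (fun n => ?_) ?_)
    (fun n => (h n).2.2 δ hδ t)
  · exact ((h n).1.mul (by fun_prop)).aestronglyMeasurable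
  · refine Eventually.of_forall fun y => ?_
    rw [norm_mul, norm_mul, Real.norm_eq_abs, Real.norm_eq_abs, Real.norm_eq_abs, abs_of_pos (Real.exp_pos _)]
    exact mul_le_mul (hC n y) (mul_le_of_le_one_right (Real.exp_pos _).le (Real.abs_cos_le_one _))
      (by positivity) ((abs_nonneg _).trans (hC n y))
  · exact Eventually.of_forall fun y => (hlim y).mul_const _

lemma Npos.mulH {φ : ℝ → ℝ} (h : Npos φ) {k : ℝ → ℝ} {ε : ℝ} (hε : 0 < ε) (hk : Measurable k)
    (hki : IntegrableOn k (Ioi ε)) (hk0 : ∀ u, ε < u → 0 ≤ k u) :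
    Npos (fun y => φ y * ∫ u in Ioi ε, k u * Real.exp (-(y ^ 2) * u)) := by
  obtain ⟨h1, ⟨C, hC⟩, h3⟩ := h
  have hm : Measurable (fun y : ℝ => ∫ u in Ioi ε, k u * Real.exp (-(y ^ 2) * u)) := by
    refine StronglyMeasurable.measurable ?_
    refine StronglyMeasurable.integral_prod_right (f := fun (y u : ℝ) => k u * Real.exp (-(y ^ 2) * u)) ?_
    refine Measurable.stronglyMeasurable ?_
    exact (hk.comp measurable_snd).mul (by fun_prop)
  have hH : ∀ y : ℝ, |∫ u in Ioi ε, k u * Real.exp (-(y ^ 2) * u)| ≤ ∫ u in Ioi ε, k u := by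
    intro y
    rw [← Real.norm_eq_abs]
    refine norm_integral_le_of_norm_le hki ?_
    refine (ae_restrict_iff' measurableSet_Ioi).2 (Eventually.of_forall fun u hu => ?_)
    rw [norm_mul, Real.norm_of_nonneg (hk0 u hu), Real.norm_of_nonneg (Real.exp_pos _).le]
    refine mul_le_of_le_one_right (hk0 u hu) ?_
    rw [Real.exp_le_one_iff]
    have : 0 < u := hε.trans hu
    nlinarith [mul_nonneg (sq_nonneg y) this.le]
  refine ⟨h1.mul hm, ⟨C * ∫ u in Ioi ε, k u, fun y => ?_⟩, fun δ hδ t => ?_⟩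
  · rw [abs_mul]
    exact mul_le_mul (hC y) (hH y) (abs_nonneg _) ((abs_nonneg _).trans (hC y))
  · have hF : Integrable (Function.uncurry fun (y u : ℝ) =>
        φ y * (Real.exp (-δ * y ^ 2) * Real.cos (t * y)) * (k u * Real.exp (-(y ^ 2) * u)))
        ((volume.restrict (Ioi 0)).prod (volume.restrict (Ioi ε))) := by
      have := (Npos.integrable h1 ⟨C, hC⟩ hδ t).norm.mul_prod hki.norm
      refine this.mono' ?_ ?_
      · refine Measurable.aestronglyMeasurable ?_
        exact ((h1.comp measurable_fst).mul (by fun_prop)).mul ((hk.comp measurable_snd).mul (by fun_prop))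
      · rw [Measure.prod_restrict]
        refine (ae_restrict_iff' (measurableSet_Ioi.prod measurableSet_Ioi)).2
          (Eventually.of_forall fun p hp => ?_)
        have hu : 0 < p.2 := hε.trans hp.2
        simp only [Function.uncurry]
        rw [norm_mul]
        refine mul_le_mul_of_nonneg_left ?_ (norm_nonneg _)
        rw [norm_mul, Real.norm_of_nonneg (Real.exp_pos _).le]
        refine mul_le_of_le_one_right (norm_nonneg _) ?_
        rw [Real.exp_le_one_iff]
        nlinarith [mul_nonneg (sq_nonneg p.1) hu.le]
    have e : ∀ y, φ y * (∫ u in Ioi ε, k u * Real.exp (-(y ^ 2) * u)) *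
        (Real.exp (-δ * y ^ 2) * Real.cos (t * y))
        = ∫ u in Ioi ε, φ y * (Real.exp (-δ * y ^ 2) * Real.cos (t * y)) *
          (k u * Real.exp (-(y ^ 2) * u)) := by
      intro y; rw [integral_const_mul]; ring
    simp_rw [e]
    rw [integral_integral_swap hF]
    refine setIntegral_nonneg measurableSet_Ioi fun u hu => ?_
    have e2 : ∀ y, φ y * (Real.exp (-δ * y ^ 2) * Real.cos (t * y)) * (k u * Real.exp (-(y ^ 2) * u))
        = k u * (φ y * (Real.exp (-(δ + u) * y ^ 2) * Real.cos (t * y))) := by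
      intro y
      have : Real.exp (-(δ + u) * y ^ 2) = Real.exp (-δ * y ^ 2) * Real.exp (-(y ^ 2) * u) := by
        rw [← Real.exp_add]; congr 1; ring
      rw [this]; ring
    simp_rw [e2, integral_const_mul]
    exact mul_nonneg (hk0 u hu) (h3 _ (add_pos hδ (hε.trans hu)) t)

lemma Npos.expH {k : ℝ → ℝ} {ε : ℝ} (hε : 0 < ε) (hk : Measurable k)
    (hki : IntegrableOn k (Ioi ε)) (hk0 : ∀ u, ε < u → 0 ≤ k u) :
    Npos (fun y => Real.exp (- ∫ u in Ioi ε, k u * (1 - Real.exp (-(y ^ 2) * u)))) := by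
  set H : ℝ → ℝ := fun y => ∫ u in Ioi ε, k u * Real.exp (-(y ^ 2) * u) with hHdef
  have hexp : ∀ y u : ℝ, ε < u → Real.exp (-(y ^ 2) * u) ≤ 1 := by
    intro y u hu
    rw [Real.exp_le_one_iff]
    have : 0 < u := hε.trans hu
    nlinarith [mul_nonneg (sq_nonneg y) this.le]
  have hi : ∀ y : ℝ, IntegrableOn (fun u => k u * Real.exp (-(y ^ 2) * u)) (Ioi ε) := by
    intro y
    refine Integrable.mono' hki (by fun_prop) ?_
    refine (ae_restrict_iff' measurableSet_Ioi).2 (Eventually.of_forall fun u hu => ?_)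
    rw [norm_mul, Real.norm_of_nonneg (hk0 u hu), Real.norm_of_nonneg (Real.exp_pos _).le]
    exact mul_le_of_le_one_right (hk0 u hu) (hexp y u hu)
  have hH0 : ∀ y, 0 ≤ H y := fun y => setIntegral_nonneg measurableSet_Ioi fun u hu =>
    mul_nonneg (hk0 u hu) (Real.exp_pos _).le
  have hHM : ∀ y, H y ≤ ∫ u in Ioi ε, k u := fun y =>
    setIntegral_mono_on (hi y) hki measurableSet_Ioi fun u hu =>
      mul_le_of_le_one_right (hk0 u hu) (hexp y u hu)
  set M := ∫ u in Ioi ε, k u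
  have hpow : ∀ (c : ℝ), 0 ≤ c → ∀ n : ℕ, Npos (fun y => (1 + c * H y) ^ n) := by
    intro c hc n
    induction n with
    | zero => simpa using Npos.one
    | succ n ih =>
      have := ih.add ((ih.mulH hε hk hki hk0).smul hc)
      convert this using 2 with y
      simp only [hHdef]; ring
  have hE : Npos (fun y => Real.exp (H y)) := by
    refine Npos.lim (φ := fun n y => (1 + (1 / (n:ℝ)) * H y) ^ n)
      (fun n => hpow _ (by positivity) n) (Real.exp M) ?_ ?_
    · intro n y
      have h1 : 0 ≤ 1 + (1 / (n:ℝ)) * H y := by have := hH0 y; positivity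
      rw [abs_of_nonneg (by positivity)]
      calc (1 + (1 / (n:ℝ)) * H y) ^ n ≤ (Real.exp ((1 / (n:ℝ)) * H y)) ^ n := by
            gcongr; rw [add_comm]; exact Real.add_one_le_exp _
        _ = Real.exp (n * ((1 / (n:ℝ)) * H y)) := by rw [← Real.exp_nat_mul]
        _ ≤ Real.exp M := by
            refine Real.exp_le_exp.2 (le_trans ?_ (hHM y))
            rcases Nat.eq_zero_or_pos n with h | h
            · subst h; simpa using hH0 y
            · have : (n:ℝ) ≠ 0 := by positivity
              field_simp; exact le_rfl
    · intro y
      have := Real.tendsto_one_add_div_pow_exp (H y)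
      refine this.congr fun n => ?_
      ring_nf
  have := hE.smul (Real.exp_pos (-M)).le
  convert this using 2 with y
  rw [← Real.exp_add]
  congr 1
  simp_rw [mul_sub, mul_one]
  rw [integral_sub hki (hi y)]
  simp only [hHdef]; ring

lemma kint {γ s : ℝ} (h0 : 0 < γ) (h1 : γ < 1) (hs : 0 ≤ s) :
    IntegrableOn (fun u : ℝ => u ^ (-1 - γ) * (1 - Real.exp (-s * u))) (Ioi 0) := by
  have hm : Measurable (fun u : ℝ => u ^ (-1 - γ) * (1 - Real.exp (-s * u))) := by fun_prop
  have hb : ∀ u : ℝ, 0 < u → ‖u ^ (-1 - γ) * (1 - Real.exp (-s * u))‖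
      = u ^ (-1 - γ) * (1 - Real.exp (-s * u)) := by
    intro u hu
    refine Real.norm_of_nonneg (mul_nonneg (by positivity) ?_)
    rw [sub_nonneg, Real.exp_le_one_iff]
    nlinarith [mul_nonneg hs hu.le]
  rw [← Ioo_union_Ici_eq_Ioi (zero_lt_one' ℝ)]
  refine IntegrableOn.union ?_ ?_
  · have : IntegrableOn (fun u : ℝ => s * u ^ (-γ)) (Ioo 0 1) :=
      Integrable.const_mul ((intervalIntegral.integrableOn_Ioo_rpow_iff zero_lt_one).2 (by linarith)) s
    refine Integrable.mono' this hm.aestronglyMeasurable ?_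
    refine (ae_restrict_iff' measurableSet_Ioo).2 (Eventually.of_forall fun u hu => ?_)
    rw [hb u hu.1]
    have e : u ^ (-γ) = u ^ (-1 - γ) * u := by
      rw [← Real.rpow_add_one hu.1.ne']; congr 1; ring
    have := Real.add_one_le_exp (-s * u)
    have hp : 0 < u ^ (-1 - γ) := Real.rpow_pos_of_pos hu.1 _
    rw [e]
    have : u ^ (-1 - γ) * (1 - Real.exp (-s * u)) ≤ u ^ (-1 - γ) * (s * u) := by
      gcongr; linarith
    linarith
  · rw [integrableOn_Ici_iff_integrableOn_Ioi]
    refine Integrable.mono' (integrableOn_Ioi_rpow_of_lt (a := -1 - γ) (by linarith) zero_lt_one)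
      hm.aestronglyMeasurable ?_
    refine (ae_restrict_iff' measurableSet_Ioi).2 (Eventually.of_forall fun u hu => ?_)
    have hu0 : (0:ℝ) < u := zero_lt_one.trans hu
    rw [hb u hu0]
    exact mul_le_of_le_one_right (by positivity) (by linarith [Real.exp_pos (-s * u)])

/-- normalising constant -/
noncomputable def Cst (γ : ℝ) : ℝ := ∫ u in Ioi (0:ℝ), u ^ (-1 - γ) * (1 - Real.exp (-1 * u))

lemma Cst_pos {γ : ℝ} (h0 : 0 < γ) (h1 : γ < 1) : 0 < Cst γ := by
  have hp : ∀ u ∈ Ioi (0:ℝ), 0 < u ^ (-1 - γ) * (1 - Real.exp (-1 * u)) := by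
    intro u hu
    refine mul_pos (Real.rpow_pos_of_pos hu _) ?_
    rw [sub_pos, Real.exp_lt_one_iff]
    have : 0 < u := hu
    linarith
  unfold Cst
  rw [setIntegral_pos_iff_support_of_nonneg_ae ?_ (kint h0 h1 zero_le_one)]
  · have : Function.support (fun u : ℝ => u ^ (-1 - γ) * (1 - Real.exp (-1 * u))) ∩ Ioi 0 = Ioi 0 :=
      inter_eq_right.2 fun u hu => (hp u hu).ne'
    rw [this]; simp
  · exact (ae_restrict_iff' measurableSet_Ioi).2 (Eventually.of_forall fun u hu => (hp u hu).le)

lemma kval {γ s : ℝ} (h0 : 0 < γ) (hs : 0 ≤ s) :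
    ∫ u in Ioi (0:ℝ), u ^ (-1 - γ) * (1 - Real.exp (-s * u)) = Cst γ * s ^ γ := by
  rcases hs.eq_or_lt with h | h
  · subst h; simp [h0.ne']
  · have := integral_comp_mul_left_Ioi (fun u : ℝ => u ^ (-1 - γ) * (1 - Real.exp (-1 * u))) 0 h
    rw [mul_zero] at this
    have e : ∫ x in Ioi (0:ℝ), (s * x) ^ (-1 - γ) * (1 - Real.exp (-1 * (s * x)))
        = s ^ (-1 - γ) * ∫ u in Ioi (0:ℝ), u ^ (-1 - γ) * (1 - Real.exp (-s * u)) := by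
      rw [← integral_const_mul]
      refine setIntegral_congr_fun measurableSet_Ioi fun x hx => ?_
      rw [Real.mul_rpow h.le (le_of_lt hx)]
      ring_nf
    rw [e, smul_eq_mul] at this
    have e2 : s ^ (-1 - γ) = s⁻¹ * (s ^ γ)⁻¹ := by
      rw [sub_eq_add_neg, Real.rpow_add h, Real.rpow_neg_one, Real.rpow_neg h.le]
    rw [e2] at this
    have hsg : 0 < s ^ γ := by positivity
    unfold Cst
    generalize (∫ u in Ioi (0:ℝ), u ^ (-1 - γ) * (1 - Real.exp (-s * u))) = A at this ⊢
    generalize (∫ u in Ioi (0:ℝ), u ^ (-1 - γ) * (1 - Real.exp (-1 * u))) = B at this ⊢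
    field_simp at this
    linarith

lemma Npos.stable {γ κ : ℝ} (h0 : 0 < γ) (h1 : γ < 1) (hκ : 0 ≤ κ) :
    Npos (fun y => Real.exp (-(κ * (Cst γ * (y ^ 2) ^ γ)))) := by
  refine Npos.lim (φ := fun n y => Real.exp (- ∫ u in Ioi (1 / ((n:ℝ) + 1)),
    (κ * u ^ (-1 - γ)) * (1 - Real.exp (-(y ^ 2) * u)))) (fun n => ?_) 1 ?_ ?_
  · have hn : 0 < 1 / ((n:ℝ) + 1) := by positivity
    refine Npos.expH hn (by fun_prop) ?_ ?_
    · exact (integrableOn_Ioi_rpow_of_lt (a := -1 - γ) (by linarith) hn).const_mul κ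
    · intro u hu
      have := hn.trans hu
      positivity
  · intro n y
    rw [abs_of_pos (Real.exp_pos _), Real.exp_le_one_iff, neg_nonpos]
    refine setIntegral_nonneg measurableSet_Ioi fun u hu => ?_
    have hu0 : 0 < u := lt_trans (by positivity) hu
    refine mul_nonneg (by positivity) ?_
    rw [sub_nonneg, Real.exp_le_one_iff]
    nlinarith [mul_nonneg (sq_nonneg y) hu0.le]
  · intro y
    refine (Real.continuous_exp.tendsto _).comp (Tendsto.neg ?_)
    have hU : ⋃ n : ℕ, Ioi (1 / ((n:ℝ) + 1)) = Ioi 0 := by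
      ext u
      simp only [mem_iUnion, mem_Ioi]
      constructor
      · rintro ⟨n, hn⟩; exact lt_trans (by positivity) hn
      · exact fun hu => exists_nat_one_div_lt hu
    have hi := (kint h0 h1 (sq_nonneg y)).const_mul κ
    have := tendsto_setIntegral_of_monotone (μ := volume) (s := fun n : ℕ => Ioi (1 / ((n:ℝ) + 1)))
      (f := fun u : ℝ => κ * (u ^ (-1 - γ) * (1 - Real.exp (-(y ^ 2) * u))))
      (fun _ => measurableSet_Ioi)
      (fun a b hab => Ioi_subset_Ioi (by gcongr)) (by rw [hU]; exact hi)
    rw [hU, integral_const_mul, kval h0 (sq_nonneg y)] at this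
    simpa only [mul_assoc] using this

section main
variable {β : ℝ}

lemma Eint (h0 : 0 < β) {s : ℝ} (hs : -1 < s) :
    IntegrableOn (fun y : ℝ => y ^ s * Real.exp (-y ^ (β + 1) / (β + 1))) (Ioi 0) := by
  have := integrableOn_rpow_mul_exp_neg_mul_rpow (p := β + 1) (b := 1 / (β + 1)) hs (by linarith)
    (by positivity)
  refine this.congr_fun (fun y _ => ?_) measurableSet_Ioi
  simp only
  congr 2; ring

lemma Eint0 (h0 : 0 < β) :
    IntegrableOn (fun y : ℝ => Real.exp (-y ^ (β + 1) / (β + 1))) (Ioi 0) := by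
  simpa using Eint h0 (s := 0) (by norm_num)

lemma fd_nonneg (h0 : 0 < β) (h1 : β < 1) {δ : ℝ} (hδ : 0 < δ) (t : ℝ) :
    0 ≤ ∫ y in Ioi (0:ℝ), Real.exp (-y ^ (β + 1) / (β + 1)) *
      (Real.exp (-δ * y ^ 2) * Real.cos (t * y)) := by
  have hC := Cst_pos (γ := (β + 1) / 2) (by linarith) (by linarith)
  have := (Npos.stable (γ := (β + 1) / 2) (κ := 1 / ((β + 1) * Cst ((β + 1) / 2)))
    (by linarith) (by linarith) (by positivity)).2.2 δ hδ t
  convert this using 1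
  refine setIntegral_congr_fun measurableSet_Ioi fun y hy => ?_
  have e : (y ^ 2) ^ ((β + 1) / 2) = y ^ (β + 1) := by
    rw [← Real.rpow_natCast, ← Real.rpow_mul (le_of_lt hy)]; congr 1; push_cast; ring
  simp only
  rw [e]
  congr 2
  have : β + 1 ≠ 0 := by positivity
  field_simp

lemma f_nonneg (h0 : 0 < β) (h1 : β < 1) (t : ℝ) :
    0 ≤ ∫ y in Ioi (0:ℝ), Real.exp (-y ^ (β + 1) / (β + 1)) * Real.cos (t * y) := by
  refine ge_of_tendsto' (tendsto_integral_of_dominated_convergence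
    (F := fun (n:ℕ) y => Real.exp (-y ^ (β + 1) / (β + 1)) *
      (Real.exp (-(1 / ((n:ℝ) + 1)) * y ^ 2) * Real.cos (t * y)))
    (fun y => Real.exp (-y ^ (β + 1) / (β + 1))) (fun n => ?_) (Eint0 h0) (fun n => ?_) ?_)
    (fun n => fd_nonneg h0 h1 (by positivity) t)
  · exact Measurable.aestronglyMeasurable (by fun_prop)
  · refine Eventually.of_forall fun y => ?_
    rw [norm_mul, norm_mul, Real.norm_of_nonneg (Real.exp_pos _).le,
      Real.norm_of_nonneg (Real.exp_pos _).le]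
    refine mul_le_of_le_one_right (Real.exp_pos _).le (mul_le_one₀ ?_ (norm_nonneg _) (Real.abs_cos_le_one _))
    rw [Real.exp_le_one_iff]
    have : 0 ≤ (1 / ((n:ℝ) + 1)) * y ^ 2 := by positivity
    linarith
  · refine Eventually.of_forall fun y => ?_
    have h : Tendsto (fun n : ℕ => Real.exp (-(1 / ((n:ℝ) + 1)) * y ^ 2)) atTop (𝓝 1) := by
      have := (tendsto_one_div_add_atTop_nhds_zero_nat (𝕜 := ℝ)).neg.mul_const (y ^ 2)
      simpa [Function.comp_def] using (Real.continuous_exp.tendsto _).comp this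
    simpa using (h.mul_const (Real.cos (t * y))).const_mul (Real.exp (-y ^ (β + 1) / (β + 1)))

/-- if `f` vanishes at `t`, then also the transform of `y^(β+1) E` does. -/
lemma moment_zero (h0 : 0 < β) (h1 : β < 1) (t : ℝ)
    (hz : ∫ y in Ioi (0:ℝ), Real.exp (-y ^ (β + 1) / (β + 1)) * Real.cos (t * y) = 0) :
    ∫ y in Ioi (0:ℝ), y ^ (β + 1) * Real.exp (-y ^ (β + 1) / (β + 1)) * Real.cos (t * y) = 0 := by
  have hb1 : β + 1 ≠ 0 := by positivity
  have hI1 : IntegrableOn (fun y : ℝ => y * Real.exp (-y ^ (β + 1) / (β + 1))) (Ioi 0) := by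
    simpa using Eint h0 (s := 1) (by norm_num)
  have hIa := Eint h0 (s := β + 1) (by linarith)
  -- derivative in t
  have hd := hasDerivAt_integral_of_dominated_loc_of_deriv_le (μ := volume.restrict (Ioi (0:ℝ)))
    (F := fun s y => Real.exp (-y ^ (β + 1) / (β + 1)) * Real.cos (s * y))
    (F' := fun s y => Real.exp (-y ^ (β + 1) / (β + 1)) * (-Real.sin (s * y) * y))
    (x₀ := t) (s := univ) (bound := fun y => y * Real.exp (-y ^ (β + 1) / (β + 1)))
    univ_mem
    (Eventually.of_forall fun s => Measurable.aestronglyMeasurable (by fun_prop))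
    ((Eint0 h0).mono' (Measurable.aestronglyMeasurable (by fun_prop)) (Eventually.of_forall fun y => by
      rw [norm_mul, Real.norm_of_nonneg (Real.exp_pos _).le]
      exact mul_le_of_le_one_right (Real.exp_pos _).le (Real.abs_cos_le_one _)))
    (Measurable.aestronglyMeasurable (by fun_prop))
    ((ae_restrict_iff' measurableSet_Ioi).2 (Eventually.of_forall fun y hy s _ => by
      have hy0 : (0:ℝ) < y := hy
      rw [norm_mul, norm_mul, norm_neg, Real.norm_of_nonneg (Real.exp_pos _).le,
        Real.norm_of_nonneg hy0.le, mul_comm y]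
      refine mul_le_mul_of_nonneg_left ?_ (Real.exp_pos _).le
      exact mul_le_of_le_one_left hy0.le (Real.abs_sin_le_one _)))
    hI1
    (Eventually.of_forall fun y s _ => by
      have : HasDerivAt (fun s : ℝ => s * y) y s := by simpa using (hasDerivAt_id s).mul_const y
      exact (this.cos).const_mul _)
  have hmin : IsLocalMin (fun s => ∫ y in Ioi (0:ℝ), Real.exp (-y ^ (β + 1) / (β + 1)) * Real.cos (s * y)) t :=
    Eventually.of_forall fun s => by simp only; rw [hz]; exact f_nonneg h0 h1 s
  have hd0 := hmin.hasDerivAt_eq_zero hd.2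
  -- integration by parts
  have hJ0 : IntegrableOn (fun y : ℝ => Real.exp (-y ^ (β + 1) / (β + 1)) * Real.cos (t * y)) (Ioi 0) :=
    ((Eint0 h0).mono' (Measurable.aestronglyMeasurable (by fun_prop)) (Eventually.of_forall fun y => by
      rw [norm_mul, Real.norm_of_nonneg (Real.exp_pos _).le]
      exact mul_le_of_le_one_right (Real.exp_pos _).le (Real.abs_cos_le_one _)))
  have hJa : IntegrableOn (fun y : ℝ => y ^ (β + 1) * Real.exp (-y ^ (β + 1) / (β + 1)) * Real.cos (t * y)) (Ioi 0) :=
    (hIa.mono' (Measurable.aestronglyMeasurable (by fun_prop))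
     ((ae_restrict_iff' measurableSet_Ioi).2 (Eventually.of_forall fun y hy => by
      have hy0 : (0:ℝ) < y := hy
      have hp : 0 ≤ y ^ (β + 1) * Real.exp (-y ^ (β + 1) / (β + 1)) := by positivity
      rw [norm_mul, Real.norm_of_nonneg hp]
      exact mul_le_of_le_one_right hp (Real.abs_cos_le_one _))))
  have hJ1 := hd.1
  have key := integral_Ioi_of_hasDerivAt_of_tendsto (a := 0) (m := 0)
    (f := fun y : ℝ => y * Real.exp (-y ^ (β + 1) / (β + 1)) * Real.cos (t * y))
    (f' := fun y : ℝ => (Real.exp (-y ^ (β + 1) / (β + 1)) * Real.cos (t * y)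
      - y ^ (β + 1) * Real.exp (-y ^ (β + 1) / (β + 1)) * Real.cos (t * y))
      + t * (Real.exp (-y ^ (β + 1) / (β + 1)) * (-Real.sin (t * y) * y)))
    ?_ ?_ ((hJ0.sub hJa).add (hJ1.const_mul t)) ?_
  · have e1 := integral_add (hJ0.sub hJa) (hJ1.const_mul t)
    simp only [Pi.sub_apply] at e1
    rw [e1, integral_sub hJ0 hJa, integral_const_mul, hd0, hz] at key
    simp at key
    exact key
  · refine Continuous.continuousWithinAt ?_
    have : Continuous fun y : ℝ => y ^ (β + 1) := Real.continuous_rpow_const (by linarith)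
    fun_prop
  · intro y hy
    have hy0 : (0:ℝ) < y := hy
    have d1 : HasDerivAt (fun y : ℝ => y ^ (β + 1)) ((β + 1) * y ^ β) y := by
      simpa using Real.hasDerivAt_rpow_const (x := y) (p := β + 1) (Or.inl hy0.ne')
    have d2 := ((d1.neg).div_const (β + 1)).exp
    have d3 : HasDerivAt (fun s : ℝ => t * s) t y := by simpa using (hasDerivAt_id y).const_mul t
    have d4 := ((hasDerivAt_id y).mul d2).mul d3.cos
    refine d4.congr_deriv ?_
    have e : y ^ (β + 1) = y ^ β * y := Real.rpow_add_one hy0.ne' β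
    simp only [id, Pi.mul_apply, Pi.neg_apply]
    rw [e]
    field_simp
    ring
  · have hb : Tendsto (fun y : ℝ => y * Real.exp (-y ^ (β + 1) / (β + 1))) atTop (𝓝 0) := by
      have h := (tendsto_rpow_mul_exp_neg_mul_atTop_nhds_zero (1 / (β + 1)) (1 / (β + 1)) (by positivity)).comp
        (tendsto_rpow_atTop (y := β + 1) (by positivity))
      refine h.congr' ?_
      filter_upwards [eventually_gt_atTop 0] with y hy
      simp only [Function.comp]
      rw [← Real.rpow_mul hy.le, mul_one_div_cancel hb1, Real.rpow_one]
      congr 2; ring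
    refine squeeze_zero_norm' ?_ hb
    filter_upwards [eventually_gt_atTop 0] with y hy
    have hp : 0 ≤ y * Real.exp (-y ^ (β + 1) / (β + 1)) := by positivity
    rw [norm_mul, Real.norm_of_nonneg hp]
    exact mul_le_of_le_one_right hp (Real.abs_cos_le_one _)

/-- for large `u`, the Gaussian-regularised transform is strictly positive. -/
lemma fd_pos_eventually (h0 : 0 < β) (t : ℝ) :
    ∀ᶠ v in atTop, 0 < ∫ y in Ioi (0:ℝ), Real.exp (-y ^ (β + 1) / (β + 1)) *
      (Real.exp (-(v ^ 2) * y ^ 2) * Real.cos (t * y)) := by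
  have hlim : Tendsto (fun v : ℝ => ∫ x in Ioi (0:ℝ), Real.exp (-(v⁻¹ * x) ^ (β + 1) / (β + 1)) *
      (Real.exp (-1 * x ^ 2) * Real.cos (t * (v⁻¹ * x)))) atTop
      (𝓝 (∫ x in Ioi (0:ℝ), Real.exp (-1 * x ^ 2))) := by
    refine tendsto_integral_filter_of_dominated_convergence (fun x => Real.exp (-1 * x ^ 2)) ?_ ?_
      (integrable_exp_neg_mul_sq one_pos).integrableOn ?_
    · exact Eventually.of_forall fun v => Measurable.aestronglyMeasurable (by fun_prop)
    · filter_upwards [eventually_gt_atTop 0] with v hv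
      refine (ae_restrict_iff' measurableSet_Ioi).2 (Eventually.of_forall fun x hx => ?_)
      have hx0 : (0:ℝ) < x := hx
      rw [norm_mul, norm_mul, Real.norm_of_nonneg (Real.exp_pos _).le,
        Real.norm_of_nonneg (Real.exp_pos _).le]
      have a1 : Real.exp (-(v⁻¹ * x) ^ (β + 1) / (β + 1)) ≤ 1 := by
        rw [Real.exp_le_one_iff, neg_div, neg_nonpos]; positivity
      have a2 : Real.exp (-1 * x ^ 2) * ‖Real.cos (t * (v⁻¹ * x))‖ ≤ Real.exp (-1 * x ^ 2) :=
        mul_le_of_le_one_right (Real.exp_pos _).le (Real.abs_cos_le_one _)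
      exact (mul_le_of_le_one_left (by positivity) a1).trans a2
    · refine Eventually.of_forall fun x => ?_
      have hv : Tendsto (fun v : ℝ => v⁻¹ * x) atTop (𝓝 0) := by
        simpa using tendsto_inv_atTop_zero.mul_const x
      have hc : Continuous fun z : ℝ => Real.exp (-z ^ (β + 1) / (β + 1)) *
          (Real.exp (-1 * x ^ 2) * Real.cos (t * z)) := by
        have : Continuous fun y : ℝ => y ^ (β + 1) := Real.continuous_rpow_const (by linarith)
        fun_prop
      have := (hc.tendsto 0).comp hv
      have hb1 : β + 1 ≠ 0 := by positivity
      simpa [Real.zero_rpow hb1, Function.comp_def] using this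
  have hpos : 0 < ∫ x in Ioi (0:ℝ), Real.exp (-1 * x ^ 2) := by
    rw [integral_gaussian_Ioi]; positivity
  filter_upwards [hlim.eventually (lt_mem_nhds hpos), eventually_gt_atTop 0] with v hv hv0
  have := integral_comp_mul_left_Ioi (fun y : ℝ => Real.exp (-y ^ (β + 1) / (β + 1)) *
      (Real.exp (-(v ^ 2) * y ^ 2) * Real.cos (t * y))) 0 (inv_pos.2 hv0)
  rw [mul_zero, inv_inv, smul_eq_mul] at this
  have e : ∀ x : ℝ, -(v ^ 2) * (v⁻¹ * x) ^ 2 = -1 * x ^ 2 := by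
    intro x; field_simp
  simp only [e] at this
  rw [this] at hv
  exact pos_of_mul_pos_right hv hv0.le

lemma f_pos_lt (h0 : 0 < β) (h1 : β < 1) (t : ℝ) :
    0 < ∫ y in Ioi (0:ℝ), Real.exp (-y ^ (β + 1) / (β + 1)) * Real.cos (t * y) := by
  refine (f_nonneg h0 h1 t).lt_of_ne' fun hz => ?_
  have hm := moment_zero h0 h1 t hz
  set γ := (β + 1) / 2 with hγ
  have hγ0 : 0 < γ := by rw [hγ]; linarith
  have hγ1 : γ < 1 := by rw [hγ]; linarith
  have hval : ∀ y : ℝ, 0 < y → ∫ u in Ioi (0:ℝ), u ^ (-1 - γ) * (1 - Real.exp (-(y ^ 2) * u))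
      = Cst γ * y ^ (β + 1) := by
    intro y hy
    rw [kval hγ0 (sq_nonneg y)]
    congr 1
    rw [← Real.rpow_natCast, ← Real.rpow_mul hy.le]; congr 1; push_cast; rw [hγ]; ring
  have hnn : ∀ y u : ℝ, 0 < u → 0 ≤ u ^ (-1 - γ) * (1 - Real.exp (-(y ^ 2) * u)) := by
    intro y u hu
    refine mul_nonneg (by positivity) ?_
    rw [sub_nonneg, Real.exp_le_one_iff]
    nlinarith [mul_nonneg (sq_nonneg y) hu.le]
  have hJ0 : IntegrableOn (fun y : ℝ => Real.exp (-y ^ (β + 1) / (β + 1)) * Real.cos (t * y)) (Ioi 0) :=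
    ((Eint0 h0).mono' (Measurable.aestronglyMeasurable (by fun_prop)) (Eventually.of_forall fun y => by
      rw [norm_mul, Real.norm_of_nonneg (Real.exp_pos _).le]
      exact mul_le_of_le_one_right (Real.exp_pos _).le (Real.abs_cos_le_one _)))
  have hF : Integrable (Function.uncurry fun (y u : ℝ) =>
      (Real.exp (-y ^ (β + 1) / (β + 1)) * Real.cos (t * y)) *
        (u ^ (-1 - γ) * (1 - Real.exp (-(y ^ 2) * u))))
      ((volume.restrict (Ioi 0)).prod (volume.restrict (Ioi 0))) := by
    rw [integrable_prod_iff (Measurable.aestronglyMeasurable (by fun_prop))]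
    refine ⟨Eventually.of_forall fun y => (kint hγ0 hγ1 (sq_nonneg y)).const_mul
      (Real.exp (-y ^ (β + 1) / (β + 1)) * Real.cos (t * y)), ?_⟩
    have hIa := (Eint h0 (s := β + 1) (by linarith)).const_mul (Cst γ)
    refine hIa.mono' ?_ ?_
    · refine AEStronglyMeasurable.integral_prod_right' (f := fun p : ℝ × ℝ => ‖_‖) ?_
      exact (Measurable.aestronglyMeasurable (by fun_prop)).norm
    · refine (ae_restrict_iff' measurableSet_Ioi).2 (Eventually.of_forall fun y hy => ?_)
      have hy0 : (0:ℝ) < y := hy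
      have e : ∫ u in Ioi (0:ℝ), ‖(Real.exp (-y ^ (β + 1) / (β + 1)) * Real.cos (t * y)) *
          (u ^ (-1 - γ) * (1 - Real.exp (-(y ^ 2) * u)))‖
          = ‖Real.exp (-y ^ (β + 1) / (β + 1)) * Real.cos (t * y)‖ * (Cst γ * y ^ (β + 1)) := by
        rw [← hval y hy0, ← integral_const_mul]
        refine setIntegral_congr_fun measurableSet_Ioi fun u hu => ?_
        rw [norm_mul, Real.norm_of_nonneg (hnn y u hu)]
      simp only [Function.uncurry]
      have hC := Cst_pos hγ0 hγ1
      rw [e, Real.norm_of_nonneg (by positivity), norm_mul, Real.norm_of_nonneg (Real.exp_pos _).le]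
      have : Real.exp (-y ^ (β + 1) / (β + 1)) * ‖Real.cos (t * y)‖ ≤ Real.exp (-y ^ (β + 1) / (β + 1)) :=
        mul_le_of_le_one_right (Real.exp_pos _).le (Real.abs_cos_le_one _)
      calc _ ≤ Real.exp (-y ^ (β + 1) / (β + 1)) * (Cst γ * y ^ (β + 1)) :=
            mul_le_mul_of_nonneg_right this (by positivity)
        _ = _ := by ring
  have hsw := integral_integral_swap hF
  have hL : ∫ y in Ioi (0:ℝ), ∫ u in Ioi (0:ℝ), (Real.exp (-y ^ (β + 1) / (β + 1)) * Real.cos (t * y)) *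
        (u ^ (-1 - γ) * (1 - Real.exp (-(y ^ 2) * u))) = 0 := by
    have : ∫ y in Ioi (0:ℝ), ∫ u in Ioi (0:ℝ), (Real.exp (-y ^ (β + 1) / (β + 1)) * Real.cos (t * y)) *
        (u ^ (-1 - γ) * (1 - Real.exp (-(y ^ 2) * u)))
      = ∫ y in Ioi (0:ℝ), Cst γ * (y ^ (β + 1) * Real.exp (-y ^ (β + 1) / (β + 1)) * Real.cos (t * y)) := by
      refine setIntegral_congr_fun measurableSet_Ioi fun y hy => ?_
      rw [integral_const_mul, hval y hy]; ring
    rw [this, integral_const_mul, hm, mul_zero]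
  set g : ℝ → ℝ := fun u => ∫ y in Ioi (0:ℝ), Real.exp (-y ^ (β + 1) / (β + 1)) *
      (Real.exp (-u * y ^ 2) * Real.cos (t * y)) with hg
  have hin : ∀ u ∈ Ioi (0:ℝ), ∫ y in Ioi (0:ℝ), (Real.exp (-y ^ (β + 1) / (β + 1)) * Real.cos (t * y)) *
        (u ^ (-1 - γ) * (1 - Real.exp (-(y ^ 2) * u))) = -(u ^ (-1 - γ) * g u) := by
    intro u hu
    have hu0 : (0:ℝ) < u := hu
    have hJu : IntegrableOn (fun y : ℝ => Real.exp (-y ^ (β + 1) / (β + 1)) *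
      (Real.exp (-u * y ^ 2) * Real.cos (t * y))) (Ioi 0) := by
      refine hJ0.norm.mono' (Measurable.aestronglyMeasurable (by fun_prop)) (Eventually.of_forall fun y => ?_)
      rw [norm_mul, norm_mul, norm_mul, Real.norm_of_nonneg (Real.exp_pos (-u * y ^ 2)).le]
      refine mul_le_mul_of_nonneg_left (mul_le_of_le_one_left (norm_nonneg _) ?_) (norm_nonneg _)
      rw [Real.exp_le_one_iff]
      nlinarith [mul_nonneg (sq_nonneg y) hu0.le]
    have e : ∀ y : ℝ, (Real.exp (-y ^ (β + 1) / (β + 1)) * Real.cos (t * y)) *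
        (u ^ (-1 - γ) * (1 - Real.exp (-(y ^ 2) * u)))
        = u ^ (-1 - γ) * (Real.exp (-y ^ (β + 1) / (β + 1)) * Real.cos (t * y)
          - Real.exp (-y ^ (β + 1) / (β + 1)) * (Real.exp (-u * y ^ 2) * Real.cos (t * y))) := by
      intro y
      have : -(y ^ 2) * u = -u * y ^ 2 := by ring
      rw [this]; ring
    simp_rw [e]
    rw [integral_const_mul, integral_sub hJ0 hJu, hz]
    simp only [hg]; ring
  have hint : IntegrableOn (fun u => u ^ (-1 - γ) * g u) (Ioi 0) := by
    have := hF.integral_prod_right.neg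
    refine IntegrableOn.congr_fun (f := fun u => -∫ y in Ioi (0:ℝ), (Real.exp (-y ^ (β + 1) / (β + 1)) * Real.cos (t * y)) *
        (u ^ (-1 - γ) * (1 - Real.exp (-(y ^ 2) * u)))) this (fun u hu => ?_) measurableSet_Ioi
    simp only
    rw [hin u hu, neg_neg]
  have hzero : ∫ u in Ioi (0:ℝ), u ^ (-1 - γ) * g u = 0 := by
    rw [hL, setIntegral_congr_fun measurableSet_Ioi hin, integral_neg] at hsw
    linarith
  rw [setIntegral_eq_zero_iff_of_nonneg_ae ?_ hint] at hzero
  · obtain ⟨V, hV⟩ := eventually_atTop.1 (fd_pos_eventually h0 t)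
    have hgp : ∀ u, u ∈ Ioi (max 1 (V ^ 2)) → 0 < g u := by
      intro u hu
      have hu1 : 1 < u := lt_of_le_of_lt (le_max_left _ _) hu
      have hu2 : V ^ 2 < u := lt_of_le_of_lt (le_max_right _ _) hu
      have := hV (Real.sqrt u) (Real.le_sqrt_of_sq_le hu2.le)
      rwa [Real.sq_sqrt (by linarith)] at this
    have hz2 := (ae_restrict_iff' measurableSet_Ioi).1 hzero
    have : volume (Ioi (max 1 (V ^ 2))) = 0 := by
      refine measure_mono_null (fun u hu => ?_) (ae_iff.1 hz2)
      have hu0 : 0 < u := lt_of_lt_of_le one_pos ((le_max_left _ _).trans (le_of_lt hu))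
      simp only [mem_ofPred_eq, not_forall]
      exact ⟨hu0, (mul_pos (Real.rpow_pos_of_pos hu0 _) (hgp u hu)).ne'⟩
    simp at this
  · refine (ae_restrict_iff' measurableSet_Ioi).2 (Eventually.of_forall fun u hu => ?_)
    exact mul_nonneg (Real.rpow_nonneg (le_of_lt hu) _) (fd_nonneg h0 h1 hu t)

lemma f_pos (h0 : 0 < β) (h1 : β ≤ 1) (t : ℝ) :
    0 < ∫ y in Ioi (0:ℝ), Real.exp (-y ^ (β + 1) / (β + 1)) * Real.cos (t * y) := by
  rcases h1.lt_or_eq with h | h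
  · exact f_pos_lt h0 h t
  · subst h
    convert gauss_cos_eq (1 / 2) (by norm_num) t using 6 with y
    have : (1:ℝ) + 1 = ((2:ℕ):ℝ) := by norm_num
    rw [this, Real.rpow_natCast]; push_cast; ring

lemma G_re (h0 : 0 < β) (t : ℝ) :
    (G β 0 (Complex.I * (t : ℂ))).re
          = ∫ y in Set.Ioi (0 : ℝ), Real.exp (-y ^ (β + 1) / (β + 1)) * Real.cos (t * y) := by
  unfold G
  have hi : IntegrableOn (fun z : ℝ => ((z ^ (0:ℝ) * Real.exp (-z ^ (β + 1) / (β + 1)) : ℝ) : ℂ) *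
      Complex.exp (-(Complex.I * (t:ℂ)) * (z : ℂ))) (Ioi 0) := by
    refine (Eint0 h0).mono' (Measurable.aestronglyMeasurable (by fun_prop)) (Eventually.of_forall fun y => ?_)
    have e : -(Complex.I * (t:ℂ)) * (y : ℂ) = ((-(t * y) : ℝ) : ℂ) * Complex.I := by push_cast; ring
    rw [norm_mul, e, Complex.norm_exp_ofReal_mul_I, Complex.norm_real, Real.rpow_zero, one_mul, mul_one,
      Real.norm_of_nonneg (Real.exp_pos _).le]
  have := integral_re hi
  simp only [RCLike.re_eq_complex_re] at this
  rw [← this]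
  refine setIntegral_congr_fun measurableSet_Ioi fun y hy => ?_
  have e : -(Complex.I * (t:ℂ)) * (y : ℂ) = ((-(t * y) : ℝ) : ℂ) * Complex.I := by push_cast; ring
  rw [e, Complex.re_ofReal_mul, Complex.exp_ofReal_mul_I_re, Real.cos_neg, Real.rpow_zero, one_mul]

end main

end helpers

/-- For `β ∈ (0,1]`: `Re G_{β,0}(it) = ∫₀^∞ exp(−y^{β+1}/(β+1)) cos(ty) dy > 0`
for every real `t`, and consequently no purely imaginary eigenvalue (hence no
Hopf bifurcation) exists for any `ϑ > 0`. -/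
theorem stmt12 (β : ℝ) (hβ0 : 0 < β) (hβ1 : β ≤ 1) :
    (∀ t : ℝ,
      (G β 0 (Complex.I * (t : ℂ))).re
          = (∫ y in Set.Ioi (0 : ℝ),
              Real.exp (-y ^ (β + 1) / (β + 1)) * Real.cos (t * y)) ∧
        0 < (G β 0 (Complex.I * (t : ℂ))).re) ∧
    ∀ ϑ : ℝ, 0 < ϑ → ∀ t : ℝ, t ≠ 0 →
      (ϑ : ℂ) * (Complex.I * (t : ℂ)) + G β 0 (Complex.I * (t : ℂ)) ≠ 0 := by
  have hp : ∀ t : ℝ, 0 < (G β 0 (Complex.I * (t : ℂ))).re := fun t => by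
    rw [G_re hβ0 t]; exact f_pos hβ0 hβ1 t
  refine ⟨fun t => ⟨G_re hβ0 t, hp t⟩, fun ϑ _ t _ h => ?_⟩
  have h2 := congrArg Complex.re h
  have h3 := hp t
  have h4 : ((ϑ : ℂ) * (Complex.I * (t : ℂ))).re = 0 := by simp
  rw [Complex.add_re, h4, Complex.zero_re] at h2
  linarith
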